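/- arXiv:math/9505205 — 3 statements merged into one kernel-verified Lean document; each statement's English description precedes it below -/
import Mathlib

section
/- Let m ≥ 3 and let σ, ρ_1, …, ρ_m : [0,1] → (0,∞) be continuously differentiable functions, with the subscripts of the ρ_i taken cyclically in {1,…,m} (so ρ_{m+1} := ρ_1 and ρ_0 in a subscript i−1 with i=1 means ρ_m). Define the angle sum Θ(t) = Σ_{i=1}^{m} arccos( 1 − 2ρ_i(t)ρ_{i+1}(t) / ((σ(t)+ρ_i(t))(σ(t)+ρ_{i+1}(t))) ). If Θ is nondecreasing on [0,1], then for every t ∈ [0,1] one has 0 ≤ Σ_{i=1}^{m} (1/(σ(t)+ρ_i(t))) · [ √( σ(t)ρ_i(t)ρ_{i−1}(t) / (σ(t)+ρ_i(t)+ρ_{i−1}(t)) ) + √( σ(t)ρ_i(t)ρ_{i+1}(t) / (σ(t)+ρ_i(t)+ρ_{i+1}(t)) ) ] · ( ρ_i′(t)/ρ_i(t) − σ′(t)/σ(t) ). -/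
open Real Set

/-!
Let `r = √(abc / (a + b + c))` be the inradius of the triangle of centers of three mutually tangent
circles of radii `a, b, c`, and let `α` be its angle at the center of the circle of radius `a`.
Computing the area of the triangle in two ways gives `sin α = 2 (a + b + c) r / ((a + b) (a + c))`,
so that differentiating `cos α = 1 - 2bc / ((a + b) (a + c))` yields
`α' = r ((b'/b - a'/a) / (a + b) + (c'/c - a'/a) / (a + c))`.
Each boundary vertex of the star lies in two faces. Summing `α'` over the faces and collecting the
two contributions of every boundary vertex turns the derivative of the angle sum into the sum in
question, and the derivative of a monotone function is nonnegative.
-/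

/-- The cosine of `tangentAngle a b c`, given by the law of cosines for the side lengths `a + b`,
`a + c` and `b + c`. -/
noncomputable def tangentCos (a b c : ℝ) : ℝ :=
  1 - 2 * b * c / ((a + b) * (a + c))

/-- The angle at the center of the circle of radius `a` in the triangle formed by the centers of
three mutually externally tangent circles of radii `a`, `b`, `c`. -/
noncomputable def tangentAngle (a b c : ℝ) : ℝ :=
  arccos (tangentCos a b c)

/-- The inradius of the triangle formed by the centers of three mutually externally tangent circles
of radii `a`, `b`, `c`. -/
noncomputable def tangentInradius (a b c : ℝ) : ℝ :=
  √(a * b * c / (a + b + c))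

/-- The angle sum at the interior vertex of a star with `m` boundary vertices, where `a` is the
label of the interior vertex and `r 1, …, r m` are those of the boundary vertices. The cyclic
indexing of the boundary is encoded by an `m`-periodic family `r` on `ℤ`. -/
noncomputable def starAngleSum (m : ℕ) (a : ℝ) (r : ℤ → ℝ) : ℝ :=
  ∑ i ∈ Finset.Icc (1 : ℤ) m, tangentAngle a (r i) (r (i + 1))

theorem sum_Icc_comp_add_one_of_eq {M : Type*} [AddCommMonoid M] {f : ℤ → M} {a b : ℤ}
    (hf : f (b + 1) = f a) :
    ∑ i ∈ Finset.Icc a b, f (i + 1) = ∑ i ∈ Finset.Icc a b, f i := by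
  rcases lt_or_ge b a with hba | hab
  · simp only [Finset.Icc_eq_empty hba.not_ge, Finset.sum_empty]
  calc ∑ i ∈ Finset.Icc a b, f (i + 1)
      = ∑ i ∈ Finset.Icc (a + 1) (b + 1), f i := by
        rw [← Finset.map_add_right_Icc, Finset.sum_map]
        rfl
    _ = f (b + 1) + ∑ i ∈ Finset.Icc (a + 1) b, f i := by
        rw [← Finset.insert_Icc_right_eq_Icc_add_one (by lia), Finset.sum_insert (by simp)]
    _ = f a + ∑ i ∈ Finset.Icc (a + 1) b, f i := by rw [hf]
    _ = ∑ i ∈ Finset.Icc a b, f i := by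
        rw [← Finset.insert_Icc_add_one_left_eq_Icc hab, Finset.sum_insert (by simp)]

theorem sum_cyclic_edges_eq_sum_vertices {M : Type*} [AddCommMonoid M] {m : ℕ} {f : ℤ → ℤ → M}
    (hf : f (m + 1) m = f 1 0) :
    ∑ i ∈ Finset.Icc (1 : ℤ) m, (f i (i + 1) + f (i + 1) i) =
      ∑ i ∈ Finset.Icc (1 : ℤ) m, (f i (i - 1) + f i (i + 1)) := by
  have shift : ∑ i ∈ Finset.Icc (1 : ℤ) m, f (i + 1) i =
      ∑ i ∈ Finset.Icc (1 : ℤ) m, f i (i - 1) := by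
    simpa only [add_sub_cancel_right] using
      sum_Icc_comp_add_one_of_eq (f := fun i ↦ f i (i - 1)) (a := 1) (b := m) (by simpa using hf)
  rw [Finset.sum_add_distrib, Finset.sum_add_distrib, shift, add_comm]

theorem tangentInradius_right_comm (a b c : ℝ) :
    tangentInradius a b c = tangentInradius a c b := by
  rw [tangentInradius, tangentInradius, mul_right_comm, add_right_comm]

section TangentCircles

variable {a b c : ℝ}

theorem tangentInradius_pos (ha : 0 < a) (hb : 0 < b) (hc : 0 < c) : 0 < tangentInradius a b c :=
  sqrt_pos.mpr (by positivity)

theorem add_add_mul_tangentInradius_sq (ha : 0 < a) (hb : 0 < b) (hc : 0 < c) :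
    (a + b + c) * tangentInradius a b c ^ 2 = a * b * c := by
  rw [tangentInradius, sq_sqrt (by positivity), mul_div_cancel₀ _ (by positivity)]

theorem tangentCos_mem_Ioo (ha : 0 < a) (hb : 0 < b) (hc : 0 < c) :
    tangentCos a b c ∈ Ioo (-1) 1 := by
  have quotient_pos : 0 < 2 * b * c / ((a + b) * (a + c)) := by positivity
  have quotient_lt_two : 2 * b * c / ((a + b) * (a + c)) < 2 := by
    rw [div_lt_iff₀ (by positivity)]
    nlinarith [mul_pos ha ha, mul_pos ha hb, mul_pos ha hc]
  rw [tangentCos]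
  constructor <;> linarith

theorem sin_tangentAngle (ha : 0 < a) (hb : 0 < b) (hc : 0 < c) :
    sin (tangentAngle a b c) =
      2 * (a + b + c) * tangentInradius a b c / ((a + b) * (a + c)) := by
  have inradius_pos := tangentInradius_pos ha hb hc
  rw [tangentAngle, sin_arccos, sqrt_eq_iff_mul_self_eq_of_pos (by positivity), tangentCos]
  field_simp
  linear_combination 4 * (a + b + c) * add_add_mul_tangentInradius_sq ha hb hc

end TangentCircles

section Derivatives

variable {S : Set ℝ} {t : ℝ}

section Face

variable {a b c : ℝ → ℝ} {a' b' c' : ℝ}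

theorem hasDerivWithinAt_tangentCos (ha : 0 < a t) (hb : 0 < b t) (hc : 0 < c t)
    (ha' : HasDerivWithinAt a a' S t) (hb' : HasDerivWithinAt b b' S t)
    (hc' : HasDerivWithinAt c c' S t) :
    HasDerivWithinAt (fun s ↦ tangentCos (a s) (b s) (c s))
      (-(2 * a t * b t * c t / ((a t + b t) * (a t + c t)) *
        (1 / (a t + b t) * (b' / b t - a' / a t) + 1 / (a t + c t) * (c' / c t - a' / a t))))
      S t := by
  have quotient_rule := (((hb'.const_mul 2).fun_mul hc').fun_div
    ((ha'.fun_add hb').fun_mul (ha'.fun_add hc')) (by positivity)).const_sub 1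
  refine quotient_rule.congr_deriv ?_
  field_simp
  ring

theorem hasDerivWithinAt_tangentAngle (ha : 0 < a t) (hb : 0 < b t) (hc : 0 < c t)
    (ha' : HasDerivWithinAt a a' S t) (hb' : HasDerivWithinAt b b' S t)
    (hc' : HasDerivWithinAt c c' S t) :
    HasDerivWithinAt (fun s ↦ tangentAngle (a s) (b s) (c s))
      (tangentInradius (a t) (b t) (c t) *
        (1 / (a t + b t) * (b' / b t - a' / a t) + 1 / (a t + c t) * (c' / c t - a' / a t)))
      S t := by
  obtain ⟨neg_one_lt_cos, cos_lt_one⟩ := tangentCos_mem_Ioo ha hb hc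
  have chain_rule := (hasDerivAt_arccos neg_one_lt_cos.ne' cos_lt_one.ne).comp_hasDerivWithinAt t
    (hasDerivWithinAt_tangentCos ha hb hc ha' hb' hc')
  refine chain_rule.congr_deriv ?_
  have inradius_pos := tangentInradius_pos ha hb hc
  rw [← sin_arccos, ← tangentAngle, sin_tangentAngle ha hb hc, neg_mul_neg, ← mul_assoc]
  congr 1
  field_simp
  linear_combination -add_add_mul_tangentInradius_sq ha hb hc

end Face

variable {m : ℕ} {σ : ℝ → ℝ} {ρ : ℤ → ℝ → ℝ} {σ' : ℝ} {ρ' : ℤ → ℝ}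

theorem hasDerivWithinAt_starAngleSum (hper : Function.Periodic ρ (m : ℤ))
    (hper' : Function.Periodic ρ' (m : ℤ)) (hσ : 0 < σ t) (hρ : ∀ i, 0 < ρ i t)
    (hσ' : HasDerivWithinAt σ σ' S t) (hρ' : ∀ i, HasDerivWithinAt (ρ i) (ρ' i) S t) :
    HasDerivWithinAt (fun s ↦ starAngleSum m (σ s) (ρ · s))
      (∑ i ∈ Finset.Icc (1 : ℤ) m, 1 / (σ t + ρ i t) *
        (tangentInradius (σ t) (ρ i t) (ρ (i - 1) t) +
          tangentInradius (σ t) (ρ i t) (ρ (i + 1) t)) * (ρ' i / ρ i t - σ' / σ t)) S t := by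
  let contribution (i j : ℤ) : ℝ :=
    1 / (σ t + ρ i t) * tangentInradius (σ t) (ρ i t) (ρ j t) * (ρ' i / ρ i t - σ' / σ t)
  have contribution_wrap : contribution (m + 1) m = contribution 1 0 := by
    simp only [contribution, add_comm (m : ℤ) 1, hper 1, hper' 1, hper.eq]
  have deriv_faces : HasDerivWithinAt (fun s ↦ starAngleSum m (σ s) (ρ · s))
      (∑ i ∈ Finset.Icc (1 : ℤ) m, (contribution i (i + 1) + contribution (i + 1) i)) S t := by
    refine HasDerivWithinAt.fun_sum fun i _ ↦ ?_
    refine (hasDerivWithinAt_tangentAngle hσ (hρ i) (hρ (i + 1)) hσ' (hρ' i)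
      (hρ' (i + 1))).congr_deriv ?_
    simp only [contribution, tangentInradius_right_comm (σ t) (ρ (i + 1) t)]
    ring
  refine deriv_faces.congr_deriv ?_
  rw [sum_cyclic_edges_eq_sum_vertices contribution_wrap]
  simp only [contribution, mul_add, add_mul]

theorem star_angle_sum_monotone_ineq_general (hper : Function.Periodic ρ (m : ℤ))
    (hσ : 0 < σ t) (hρ : ∀ i, 0 < ρ i t)
    (hσ' : HasDerivWithinAt σ σ' S t) (hρ' : ∀ i, HasDerivWithinAt (ρ i) (ρ' i) S t)
    (hS : UniqueDiffWithinAt ℝ S t) (hmono : MonotoneOn (fun s ↦ starAngleSum m (σ s) (ρ · s)) S) :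
    0 ≤ ∑ i ∈ Finset.Icc (1 : ℤ) m, 1 / (σ t + ρ i t) *
      (tangentInradius (σ t) (ρ i t) (ρ (i - 1) t) +
        tangentInradius (σ t) (ρ i t) (ρ (i + 1) t)) * (ρ' i / ρ i t - σ' / σ t) := by
  have hper' : Function.Periodic ρ' (m : ℤ) := fun i ↦
    hS.eq_deriv S (hper i ▸ hρ' (i + m)) (hρ' i)
  rw [← (hasDerivWithinAt_starAngleSum hper hper' hσ hρ hσ' hρ').derivWithin hS]
  exact hmono.derivWithin_nonneg

end Derivatives

/-- Lemma 3.6: if the angle sum at the center of a star (center label `σ`,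
boundary labels `ρ 1, …, ρ m` taken cyclically, all C¹ in `t ∈ [0,1]`) is
nondecreasing, then the stated sum is nonnegative for every `t ∈ [0,1]`. -/
theorem star_angle_sum_monotone_ineq
    (m : ℕ) (hm : 3 ≤ m)
    (σ σ' : ℝ → ℝ) (ρ ρ' : ℤ → ℝ → ℝ)
    (hper : ∀ i : ℤ, ρ (i + m) = ρ i)
    (hσpos : ∀ t ∈ Icc (0:ℝ) 1, 0 < σ t)
    (hρpos : ∀ i : ℤ, ∀ t ∈ Icc (0:ℝ) 1, 0 < ρ i t)
    (hσderiv : ∀ t ∈ Icc (0:ℝ) 1, HasDerivAt σ (σ' t) t)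
    (hσcont : ContinuousOn σ' (Icc (0:ℝ) 1))
    (hρderiv : ∀ i : ℤ, ∀ t ∈ Icc (0:ℝ) 1, HasDerivAt (ρ i) (ρ' i t) t)
    (hρcont : ∀ i : ℤ, ContinuousOn (ρ' i) (Icc (0:ℝ) 1))
    (Θ : ℝ → ℝ)
    (hΘ : ∀ t, Θ t = ∑ i ∈ Finset.Icc (1:ℤ) m,
      Real.arccos (1 - 2 * ρ i t * ρ (i+1) t /
        ((σ t + ρ i t) * (σ t + ρ (i+1) t))))
    (hmono : MonotoneOn Θ (Icc (0:ℝ) 1)) :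
    ∀ t ∈ Icc (0:ℝ) 1,
      0 ≤ ∑ i ∈ Finset.Icc (1:ℤ) m,
        (1 / (σ t + ρ i t)) *
          (Real.sqrt (σ t * ρ i t * ρ (i-1) t / (σ t + ρ i t + ρ (i-1) t)) +
           Real.sqrt (σ t * ρ i t * ρ (i+1) t / (σ t + ρ i t + ρ (i+1) t))) *
          (ρ' i t / ρ i t - σ' t / σ t) := by
  exact fun t ht ↦ star_angle_sum_monotone_ineq_general hper (hσpos t ht) (hρpos · t ht)
    (hσderiv t ht).hasDerivWithinAt (fun i ↦ (hρderiv i t ht).hasDerivWithinAt)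
    (uniqueDiffOn_Icc_zero_one t ht) (funext hΘ ▸ hmono)
end

section
/- Let m ≥ 3 and let σ, ρ_1, …, ρ_m : [0,1] → (0,∞) be continuously differentiable functions, with the subscripts of the ρ_i taken cyclically in {1,…,m} (so ρ_{m+1} := ρ_1 and a subscript i−1 with i=1 means ρ_m). Define Θ(t) = Σ_{i=1}^{m} arccos( 1 − 2ρ_i(t)ρ_{i+1}(t) / ((σ(t)+ρ_i(t))(σ(t)+ρ_{i+1}(t))) ). Then Θ is differentiable on [0,1] and for every t ∈ [0,1], Θ′(t) = Σ_{i=1}^{m} (1/(σ(t)+ρ_i(t))) · [ √( σ(t)ρ_i(t)ρ_{i−1}(t) / (σ(t)+ρ_i(t)+ρ_{i−1}(t)) ) + √( σ(t)ρ_i(t)ρ_{i+1}(t) / (σ(t)+ρ_i(t)+ρ_{i+1}(t)) ) ] · ( ρ_i′(t)/ρ_i(t) − σ′(t)/σ(t) ). -/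
open Real Set

/-!
Let `θ` be the angle at the centre of the circle of radius `a` in the triangle of centres of three
mutually tangent circles of radii `a`, `b`, `c`, and let `r = √(abc / (a + b + c))` be the inradius
of that triangle. With `D = (a + b)(a + c)`, we have `cos θ = 1 - 2bc / D` and
`sin θ = 2 r (a + b + c) / D`, and logarithmic differentiation of `bc / D` gives
`dθ = r / (a + b) · d log (b / a) + r / (a + c) · d log (c / a)`.
Around a star each boundary circle lies in two consecutive faces; shifting the index of the second
summand by one collects its two contributions.
-/

section TangencyAngle

/-- The cosine of the angle at the centre of the circle of radius `a` in the triangle formed by the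
centres of three mutually externally tangent circles of radii `a`, `b`, `c`, as given by the law of
cosines for the side lengths `a + b`, `a + c`, `b + c`. -/
noncomputable def cosTangencyAngle (a b c : ℝ) : ℝ :=
  1 - 2 * b * c / ((a + b) * (a + c))

/-- The angle at the centre of the circle of radius `a` in the triangle formed by the centres of
three mutually externally tangent circles of radii `a`, `b`, `c`. -/
noncomputable def tangencyAngle (a b c : ℝ) : ℝ :=
  arccos (cosTangencyAngle a b c)

/-- The inradius of the triangle formed by the centres of three mutually externally tangent circles
of radii `a`, `b`, `c`. By Heron's formula, with semiperimeter `a + b + c`, the area is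
`√((a + b + c) * a * b * c)`, and the inradius is the area divided by the semiperimeter. -/
noncomputable def tangencyInradius (a b c : ℝ) : ℝ :=
  √(a * b * c / (a + b + c))

lemma tangencyInradius_right_comm (a b c : ℝ) :
    tangencyInradius a b c = tangencyInradius a c b := by
  simp only [tangencyInradius, mul_right_comm a b c, add_right_comm a b c]

section Trigonometry

variable {a b c : ℝ}

lemma tangencyInradius_pos (ha : 0 < a) (hb : 0 < b) (hc : 0 < c) :
    0 < tangencyInradius a b c :=
  sqrt_pos.2 (by positivity)

lemma tangencyInradius_sq_mul (ha : 0 < a) (hb : 0 < b) (hc : 0 < c) :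
    tangencyInradius a b c ^ 2 * (a + b + c) = a * b * c := by
  rw [tangencyInradius, sq_sqrt (by positivity), div_mul_cancel₀ _ (by positivity)]

lemma cosTangencyAngle_mem_Ioo (ha : 0 < a) (hb : 0 < b) (hc : 0 < c) :
    cosTangencyAngle a b c ∈ Ioo (-1) 1 := by
  have quotient_pos : 0 < 2 * b * c / ((a + b) * (a + c)) := by positivity
  have quotient_lt_two : 2 * b * c / ((a + b) * (a + c)) < 2 := by
    rw [div_lt_iff₀ (by positivity)]
    linarith [mul_pos ha ha, mul_pos ha hb, mul_pos ha hc]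
  constructor <;> unfold cosTangencyAngle <;> linarith

lemma sqrt_one_sub_cosTangencyAngle_sq (ha : 0 < a) (hb : 0 < b) (hc : 0 < c) :
    √(1 - cosTangencyAngle a b c ^ 2) =
      2 * tangencyInradius a b c * (a + b + c) / ((a + b) * (a + c)) := by
  have r_pos := tangencyInradius_pos ha hb hc
  rw [sqrt_eq_iff_mul_self_eq_of_pos (by positivity)]
  calc
    _ = 4 * (tangencyInradius a b c ^ 2 * (a + b + c)) * (a + b + c) /
        ((a + b) * (a + c)) ^ 2 := by
      rw [div_mul_div_comm, ← sq ((a + b) * (a + c))]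
      ring
    _ = 4 * (a * b * c) * (a + b + c) / ((a + b) * (a + c)) ^ 2 := by
      rw [tangencyInradius_sq_mul ha hb hc]
    _ = 1 - cosTangencyAngle a b c ^ 2 := by
      unfold cosTangencyAngle
      field_simp
      ring

end Trigonometry

section Derivative

variable {a b c : ℝ → ℝ} {a' b' c' t : ℝ}

lemma hasDerivAt_cosTangencyAngle (ha : HasDerivAt a a' t) (hb : HasDerivAt b b' t)
    (hc : HasDerivAt c c' t) (ha₀ : 0 < a t) (hb₀ : 0 < b t) (hc₀ : 0 < c t) :
    HasDerivAt (fun s => cosTangencyAngle (a s) (b s) (c s))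
      (-(2 * (a t * b t * c t) / ((a t + b t) * (a t + c t)) *
        (1 / (a t + b t) * (b' / b t - a' / a t) +
          1 / (a t + c t) * (c' / c t - a' / a t)))) t := by
  have quotient_rule := (((hb.const_mul 2).fun_mul hc).fun_div
    ((ha.fun_add hb).fun_mul (ha.fun_add hc)) (by positivity)).const_sub 1
  refine quotient_rule.congr_deriv ?_
  field_simp
  ring

lemma hasDerivAt_tangencyAngle (ha : HasDerivAt a a' t) (hb : HasDerivAt b b' t)
    (hc : HasDerivAt c c' t) (ha₀ : 0 < a t) (hb₀ : 0 < b t) (hc₀ : 0 < c t) :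
    HasDerivAt (fun s => tangencyAngle (a s) (b s) (c s))
      (1 / (a t + b t) * tangencyInradius (a t) (b t) (c t) * (b' / b t - a' / a t) +
        1 / (a t + c t) * tangencyInradius (a t) (b t) (c t) * (c' / c t - a' / a t)) t := by
  have cos_mem := cosTangencyAngle_mem_Ioo ha₀ hb₀ hc₀
  have r_pos := tangencyInradius_pos ha₀ hb₀ hc₀
  have chain_rule := (hasDerivAt_arccos cos_mem.1.ne' cos_mem.2.ne).comp t
    (hasDerivAt_cosTangencyAngle ha hb hc ha₀ hb₀ hc₀)
  refine chain_rule.congr_deriv ?_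
  rw [sqrt_one_sub_cosTangencyAngle_sq ha₀ hb₀ hc₀, ← tangencyInradius_sq_mul ha₀ hb₀ hc₀]
  field_simp

end Derivative

end TangencyAngle

lemma sum_Icc_add_one_eq_sum_Icc {M : Type*} [AddCommMonoid M] {f : ℤ → M} {k l : ℤ}
    (hf : f (l + 1) = f k) :
    ∑ i ∈ Finset.Icc k l, f (i + 1) = ∑ i ∈ Finset.Icc k l, f i := by
  simp only [← Finset.Ico_add_one_right_eq_Icc, Finset.sum_Ico_add',
    Finset.Ico_add_one_add_one_eq_Ioc]
  obtain hkl | hlk := lt_or_ge k (l + 1)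
  · rw [← Finset.add_sum_Ioo_eq_sum_Ioc hkl, ← Finset.add_sum_Ioo_eq_sum_Ico hkl, hf]
  · rw [Finset.Ioc_eq_empty_of_le hlk, Finset.Ico_eq_empty_of_le hlk]

theorem star_angle_sum_hasDerivAt_general {m : ℕ} {σ : ℝ → ℝ} {ρ : ℤ → ℝ → ℝ} {σ' : ℝ}
    {ρ' : ℤ → ℝ} {t : ℝ} (hper : Function.Periodic ρ m) (hσ : HasDerivAt σ σ' t)
    (hρ : ∀ i, HasDerivAt (ρ i) (ρ' i) t) (hσ₀ : 0 < σ t) (hρ₀ : ∀ i, 0 < ρ i t) :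
    HasDerivAt (fun s => ∑ i ∈ Finset.Icc (1 : ℤ) m, tangencyAngle (σ s) (ρ i s) (ρ (i + 1) s))
      (∑ i ∈ Finset.Icc (1 : ℤ) m, 1 / (σ t + ρ i t) *
        (tangencyInradius (σ t) (ρ i t) (ρ (i - 1) t) +
          tangencyInradius (σ t) (ρ i t) (ρ (i + 1) t)) *
        (ρ' i / ρ i t - σ' / σ t)) t := by
  have hper' : Function.Periodic ρ' m := fun i => (hper i ▸ hρ (i + m)).unique (hρ i)
  let contribution (i j : ℤ) : ℝ :=
    1 / (σ t + ρ i t) * tangencyInradius (σ t) (ρ i t) (ρ j t) * (ρ' i / ρ i t - σ' / σ t)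
  have shift : ∑ i ∈ Finset.Icc (1 : ℤ) m, contribution (i + 1) i =
      ∑ i ∈ Finset.Icc (1 : ℤ) m, contribution i (i - 1) := by
    have wrap : contribution (m + 1) (m + 1 - 1) = contribution 1 (1 - 1) := by
      simp only [contribution, add_comm (m : ℤ) 1, add_sub_right_comm, hper _, hper' _]
    simpa only [add_sub_cancel_right] using
      sum_Icc_add_one_eq_sum_Icc (f := fun i => contribution i (i - 1)) wrap
  have faces := HasDerivAt.fun_sum (u := Finset.Icc (1 : ℤ) m) fun i _ =>
    hasDerivAt_tangencyAngle hσ (hρ i) (hρ (i + 1)) hσ₀ (hρ₀ i) (hρ₀ (i + 1))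
  refine faces.congr_deriv ?_
  calc
    _ = ∑ i ∈ Finset.Icc (1 : ℤ) m, (contribution i (i + 1) + contribution (i + 1) i) := by
      simp only [contribution, tangencyInradius_right_comm (σ t) (ρ (_ + 1) t)]
    _ = ∑ i ∈ Finset.Icc (1 : ℤ) m, (contribution i (i + 1) + contribution i (i - 1)) := by
      rw [Finset.sum_add_distrib, shift, ← Finset.sum_add_distrib]
    _ = _ := Finset.sum_congr rfl fun i _ => by ring

/-- The derivative computation in the proof of Lemma 3.6: the angle sum `Θ`
at the center of a star (center label `σ`, boundary labels `ρ 1, …, ρ m`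
taken cyclically, all C¹ in `t ∈ [0,1]`) is differentiable with the stated
derivative. -/
theorem star_angle_sum_hasDerivAt
    (m : ℕ) (hm : 3 ≤ m)
    (σ σ' : ℝ → ℝ) (ρ ρ' : ℤ → ℝ → ℝ)
    (hper : ∀ i : ℤ, ρ (i + m) = ρ i)
    (hσpos : ∀ t ∈ Icc (0:ℝ) 1, 0 < σ t)
    (hρpos : ∀ i : ℤ, ∀ t ∈ Icc (0:ℝ) 1, 0 < ρ i t)
    (hσderiv : ∀ t ∈ Icc (0:ℝ) 1, HasDerivAt σ (σ' t) t)
    (hσcont : ContinuousOn σ' (Icc (0:ℝ) 1))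
    (hρderiv : ∀ i : ℤ, ∀ t ∈ Icc (0:ℝ) 1, HasDerivAt (ρ i) (ρ' i t) t)
    (hρcont : ∀ i : ℤ, ContinuousOn (ρ' i) (Icc (0:ℝ) 1))
    (Θ : ℝ → ℝ)
    (hΘ : ∀ t, Θ t = ∑ i ∈ Finset.Icc (1:ℤ) m,
      Real.arccos (1 - 2 * ρ i t * ρ (i+1) t /
        ((σ t + ρ i t) * (σ t + ρ (i+1) t)))) :
    ∀ t ∈ Icc (0:ℝ) 1,
      HasDerivAt Θ
        (∑ i ∈ Finset.Icc (1:ℤ) m,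
          (1 / (σ t + ρ i t)) *
            (Real.sqrt (σ t * ρ i t * ρ (i-1) t / (σ t + ρ i t + ρ (i-1) t)) +
             Real.sqrt (σ t * ρ i t * ρ (i+1) t / (σ t + ρ i t + ρ (i+1) t))) *
            (ρ' i t / ρ i t - σ' t / σ t)) t := by
  intro t ht
  rw [funext hΘ]
  exact star_angle_sum_hasDerivAt_general hper (hσderiv t ht) (fun i => hρderiv i t ht)
    (hσpos t ht) (fun i => hρpos i t ht)
end

section
/- Let σ, ρ_1, ρ_2 : [0,1] → (0,∞) be differentiable functions and define α(t) = arccos( 1 − 2ρ_1(t)ρ_2(t) / ((σ(t)+ρ_1(t))(σ(t)+ρ_2(t))) ). Then α is differentiable on [0,1] and for every t, α′(t) = √( σ(t)ρ_1(t)ρ_2(t) / (σ(t)+ρ_1(t)+ρ_2(t)) ) · [ (1/(σ(t)+ρ_1(t)))·( ρ_1′(t)/ρ_1(t) − σ′(t)/σ(t) ) + (1/(σ(t)+ρ_2(t)))·( ρ_2′(t)/ρ_2(t) − σ′(t)/σ(t) ) ]. -/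
open Real Set

/-!
Writing `cos α = 1 - 2 u`, the function `u = sin² (α / 2)` is the product of the two ratios
`ρᵢ / (σ + ρᵢ)`, and each ratio has logarithmic derivative `σ / (σ + ρᵢ) * (ρᵢ' / ρᵢ - σ' / σ)`.
Since `α = arccos (1 - 2 u)` has derivative `√(u / (1 - u)) * (u' / u) = tan (α / 2) * (u' / u)`,
the formula follows from `σ * tan (α / 2) = √(σ ρ₁ ρ₂ / (σ + ρ₁ + ρ₂))`, both sides being the
inradius of the triangle of centers.
-/

theorem hasDerivWithinAt_arccos_one_sub_two_mul {u : ℝ → ℝ} {u' t : ℝ} {s : Set ℝ}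
    (hu : HasDerivWithinAt u u' s t) (hpos : 0 < u t) (hlt : u t < 1) :
    HasDerivWithinAt (fun x ↦ arccos (1 - 2 * u x)) (√(u t / (1 - u t)) * (u' / u t)) s t := by
  have hone_sub : 0 < 1 - u t := sub_pos.2 hlt
  have hsin : √(1 - (1 - 2 * u t) ^ 2) = 2 * (√(u t) * √(1 - u t)) := by
    rw [← sqrt_mul hpos.le, show 1 - (1 - 2 * u t) ^ 2 = 2 ^ 2 * (u t * (1 - u t)) by ring,
      sqrt_mul (by positivity), sqrt_sq zero_le_two]
  have harccos := hasDerivAt_arccos (x := 1 - 2 * u t) (by linarith) (by linarith)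
  refine (harccos.comp_hasDerivWithinAt t ((hu.const_mul 2).const_sub 1)).congr_deriv ?_
  rw [hsin, sqrt_div hpos.le]
  field_simp
  rw [sq_sqrt hpos.le]

theorem hasDerivWithinAt_div_add {𝕜 : Type*} [NontriviallyNormedField 𝕜] {σ ρ : 𝕜 → 𝕜}
    {σ' ρ' t : 𝕜} {s : Set 𝕜} (hσ : HasDerivWithinAt σ σ' s t) (hρ : HasDerivWithinAt ρ ρ' s t)
    (hσ₀ : σ t ≠ 0) (hρ₀ : ρ t ≠ 0) (hadd : σ t + ρ t ≠ 0) :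
    HasDerivWithinAt (fun x ↦ ρ x / (σ x + ρ x))
      (ρ t / (σ t + ρ t) * (σ t / (σ t + ρ t) * (ρ' / ρ t - σ' / σ t))) s t := by
  refine (hρ.fun_div (hσ.fun_add hρ) hadd).congr_deriv ?_
  field_simp
  ring

/-- The squared sine of half the angle at the center of the circle of radius `r` in the triangle of
centers of three mutually externally tangent circles of radii `r`, `a`, `b`. This is the half-angle
formula `(p - y) * (p - z) / (y * z)` for the adjacent sides `y = r + a`, `z = r + b` and the
semiperimeter `p = r + a + b`, split into one factor for each adjacent side. -/
noncomputable def halfAngleSinSq (r a b : ℝ) : ℝ := a / (r + a) * (b / (r + b))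

section HalfAngle

variable {r a b : ℝ}

theorem halfAngleSinSq_pos (hr : 0 < r) (ha : 0 < a) (hb : 0 < b) : 0 < halfAngleSinSq r a b := by
  unfold halfAngleSinSq
  positivity

theorem one_sub_halfAngleSinSq (ha : r + a ≠ 0) (hb : r + b ≠ 0) :
    1 - halfAngleSinSq r a b = r * (r + a + b) / ((r + a) * (r + b)) := by
  unfold halfAngleSinSq
  field_simp
  ring

theorem halfAngleSinSq_lt_one (hr : 0 < r) (ha : 0 < a) (hb : 0 < b) :
    halfAngleSinSq r a b < 1 := by
  rw [← sub_pos, one_sub_halfAngleSinSq (by positivity) (by positivity)]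
  positivity

theorem sqrt_halfAngleSinSq_div_one_sub_mul (hr : 0 < r) (ha : 0 < a) (hb : 0 < b) :
    √(halfAngleSinSq r a b / (1 - halfAngleSinSq r a b)) * r = √(r * a * b / (r + a + b)) := by
  have htan_sq : halfAngleSinSq r a b / (1 - halfAngleSinSq r a b) = a * b / (r * (r + a + b)) := by
    rw [one_sub_halfAngleSinSq (by positivity) (by positivity), halfAngleSinSq]
    field_simp
  calc √(halfAngleSinSq r a b / (1 - halfAngleSinSq r a b)) * r
      = √(a * b / (r * (r + a + b)) * r ^ 2) := by
        rw [htan_sq, sqrt_mul (by positivity), sqrt_sq hr.le]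
    _ = √(r * a * b / (r + a + b)) := by
        congr 1
        field_simp

end HalfAngle

section Derivative

variable {σ ρ₁ ρ₂ : ℝ → ℝ} {σ' ρ₁' ρ₂' t : ℝ} {s : Set ℝ}

theorem hasDerivWithinAt_halfAngleSinSq (hσ : HasDerivWithinAt σ σ' s t)
    (hρ₁ : HasDerivWithinAt ρ₁ ρ₁' s t) (hρ₂ : HasDerivWithinAt ρ₂ ρ₂' s t)
    (hσpos : 0 < σ t) (hρ₁pos : 0 < ρ₁ t) (hρ₂pos : 0 < ρ₂ t) :
    HasDerivWithinAt (fun x ↦ halfAngleSinSq (σ x) (ρ₁ x) (ρ₂ x))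
      (halfAngleSinSq (σ t) (ρ₁ t) (ρ₂ t) *
        (σ t * (1 / (σ t + ρ₁ t) * (ρ₁' / ρ₁ t - σ' / σ t) +
          1 / (σ t + ρ₂ t) * (ρ₂' / ρ₂ t - σ' / σ t)))) s t := by
  have hratio₁ := hasDerivWithinAt_div_add hσ hρ₁ hσpos.ne' hρ₁pos.ne' (by positivity)
  have hratio₂ := hasDerivWithinAt_div_add hσ hρ₂ hσpos.ne' hρ₂pos.ne' (by positivity)
  refine (hratio₁.fun_mul hratio₂).congr_deriv ?_
  unfold halfAngleSinSq
  ring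

theorem face_angle_hasDerivAt_general (hσ : HasDerivWithinAt σ σ' s t)
    (hρ₁ : HasDerivWithinAt ρ₁ ρ₁' s t) (hρ₂ : HasDerivWithinAt ρ₂ ρ₂' s t)
    (hσpos : 0 < σ t) (hρ₁pos : 0 < ρ₁ t) (hρ₂pos : 0 < ρ₂ t) :
    HasDerivWithinAt
      (fun x ↦ arccos (1 - 2 * ρ₁ x * ρ₂ x / ((σ x + ρ₁ x) * (σ x + ρ₂ x))))
      (√(σ t * ρ₁ t * ρ₂ t / (σ t + ρ₁ t + ρ₂ t)) *
        (1 / (σ t + ρ₁ t) * (ρ₁' / ρ₁ t - σ' / σ t) +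
          1 / (σ t + ρ₂ t) * (ρ₂' / ρ₂ t - σ' / σ t))) s t := by
  have hpos := halfAngleSinSq_pos hσpos hρ₁pos hρ₂pos
  have hcos (x : ℝ) : 1 - 2 * ρ₁ x * ρ₂ x / ((σ x + ρ₁ x) * (σ x + ρ₂ x)) =
      1 - 2 * halfAngleSinSq (σ x) (ρ₁ x) (ρ₂ x) := by
    rw [halfAngleSinSq, div_mul_div_comm, mul_assoc, mul_div_assoc]
  simp only [hcos]
  refine (hasDerivWithinAt_arccos_one_sub_two_mul
    (hasDerivWithinAt_halfAngleSinSq hσ hρ₁ hρ₂ hσpos hρ₁pos hρ₂pos) hpos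
    (halfAngleSinSq_lt_one hσpos hρ₁pos hρ₂pos)).congr_deriv ?_
  rw [mul_div_cancel_left₀ _ hpos.ne', ← mul_assoc,
    sqrt_halfAngleSinSq_div_one_sub_mul hσpos hρ₁pos hρ₂pos]

end Derivative

/-- Single-face derivative computation: the angle `α` at the center of the
circle of radius `σ t` in the triangle of centers of three mutually
externally tangent circles of radii `σ t`, `ρ₁ t`, `ρ₂ t` is differentiable
in `t` with the stated derivative. -/
theorem face_angle_hasDerivAt
    (σ σ' ρ₁ ρ₁' ρ₂ ρ₂' : ℝ → ℝ)
    (hσpos : ∀ t ∈ Icc (0:ℝ) 1, 0 < σ t)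
    (hρ₁pos : ∀ t ∈ Icc (0:ℝ) 1, 0 < ρ₁ t)
    (hρ₂pos : ∀ t ∈ Icc (0:ℝ) 1, 0 < ρ₂ t)
    (hσderiv : ∀ t ∈ Icc (0:ℝ) 1, HasDerivAt σ (σ' t) t)
    (hρ₁deriv : ∀ t ∈ Icc (0:ℝ) 1, HasDerivAt ρ₁ (ρ₁' t) t)
    (hρ₂deriv : ∀ t ∈ Icc (0:ℝ) 1, HasDerivAt ρ₂ (ρ₂' t) t)
    (α : ℝ → ℝ)
    (hα : ∀ t, α t = Real.arccos
      (1 - 2 * ρ₁ t * ρ₂ t / ((σ t + ρ₁ t) * (σ t + ρ₂ t)))) :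
    ∀ t ∈ Icc (0:ℝ) 1,
      HasDerivAt α
        (Real.sqrt (σ t * ρ₁ t * ρ₂ t / (σ t + ρ₁ t + ρ₂ t)) *
          ((1 / (σ t + ρ₁ t)) * (ρ₁' t / ρ₁ t - σ' t / σ t) +
           (1 / (σ t + ρ₂ t)) * (ρ₂' t / ρ₂ t - σ' t / σ t))) t := by
  intro t ht
  rw [funext hα, ← hasDerivWithinAt_univ]
  exact face_angle_hasDerivAt_general (hσderiv t ht).hasDerivWithinAt
    (hρ₁deriv t ht).hasDerivWithinAt (hρ₂deriv t ht).hasDerivWithinAt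
    (hσpos t ht) (hρ₁pos t ht) (hρ₂pos t ht)
end
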